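/- Let v : ℝ³ → ℝ³ be smooth, divergence-free on ℝ³ (div v = 0), and vanishing identically on the boundary plane {x ∈ ℝ³ : x₃ = 0}. Then at every point of the form (0, 0, θ̄): ∂_θ̄[ (curl curl v)(T(z,r̄,θ̄))·(0,0,1) ] evaluated at (0,0,θ̄) equals −κ'(θ̄)·∂_z v_r̄ − κ(θ̄)·∂_z∂_θ̄ v_r̄ + ∂_z∂_r̄∂_θ̄ v_r̄ + ∂_z∂_θ̄² v_θ̄, with all frame components evaluated at (0,0,θ̄). (Since div v = 0, curl curl v = −Δv, so this computes the tangential derivative of the normal component of the vector Laplacian of v along the curve on the boundary.) -/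

import Mathlib

/-- Partial derivative in the `j`-th coordinate direction on Euclidean `ℝ³`. -/
noncomputable def pdE {F : Type*} [NormedAddCommGroup F] [NormedSpace ℝ F]
    (j : Fin 3) (g : EuclideanSpace ℝ (Fin 3) → F) (x : EuclideanSpace ℝ (Fin 3)) : F :=
  fderiv ℝ g x (EuclideanSpace.single j 1)

/-- Euclidean divergence `div v = ∂₁v₁ + ∂₂v₂ + ∂₃v₃`. -/
noncomputable def div3 (v : EuclideanSpace ℝ (Fin 3) → EuclideanSpace ℝ (Fin 3))
    (x : EuclideanSpace ℝ (Fin 3)) : ℝ :=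
  ∑ i : Fin 3, pdE i (fun y => v y i) x

/-- Curvature `κ(θ̄) = |φ''(θ̄)|` of a unit-speed plane curve. -/
noncomputable def curveKappa (φ : ℝ → EuclideanSpace ℝ (Fin 2)) (θ : ℝ) : ℝ :=
  ‖deriv (deriv φ) θ‖

/-- Unit normal `N(θ̄) = φ''(θ̄)/|φ''(θ̄)|` of a unit-speed plane curve. -/
noncomputable def curveN (φ : ℝ → EuclideanSpace ℝ (Fin 2)) (θ : ℝ) :
    EuclideanSpace ℝ (Fin 2) :=
  ‖deriv (deriv φ) θ‖⁻¹ • deriv (deriv φ) θ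

/-- The factor `f(r̄,θ̄) = 1 − r̄·κ(θ̄)`. -/
noncomputable def fFactor (φ : ℝ → EuclideanSpace ℝ (Fin 2)) (r θ : ℝ) : ℝ :=
  1 - r * curveKappa φ θ

/-- Embedding `ℝ² ∋ v ↦ (v, 0) ∈ ℝ³`. -/
noncomputable def emb23 (v : EuclideanSpace ℝ (Fin 2)) : EuclideanSpace ℝ (Fin 3) :=
  !₂[v 0, v 1, 0]

/-- The coordinate map `T(z,r̄,θ̄) = (φ(θ̄) + r̄·N(θ̄), z)`. -/
noncomputable def Tmap (φ : ℝ → EuclideanSpace ℝ (Fin 2)) (z r θ : ℝ) :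
    EuclideanSpace ℝ (Fin 3) :=
  !₂[(φ θ + r • curveN φ θ) 0, (φ θ + r • curveN φ θ) 1, z]

/-- Frame component `v_z(z,r̄,θ̄) = v(T(z,r̄,θ̄))·(0,0,1)`. -/
noncomputable def vzComp (φ : ℝ → EuclideanSpace ℝ (Fin 2))
    (v : EuclideanSpace ℝ (Fin 3) → EuclideanSpace ℝ (Fin 3)) (z r θ : ℝ) : ℝ :=
  inner ℝ (v (Tmap φ z r θ)) (EuclideanSpace.single 2 (1:ℝ))

/-- Frame component `v_r̄(z,r̄,θ̄) = v(T(z,r̄,θ̄))·(N(θ̄),0)`. -/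
noncomputable def vrComp (φ : ℝ → EuclideanSpace ℝ (Fin 2))
    (v : EuclideanSpace ℝ (Fin 3) → EuclideanSpace ℝ (Fin 3)) (z r θ : ℝ) : ℝ :=
  inner ℝ (v (Tmap φ z r θ)) (emb23 (curveN φ θ))

/-- Frame component `v_θ̄(z,r̄,θ̄) = v(T(z,r̄,θ̄))·(φ'(θ̄),0)`. -/
noncomputable def vθComp (φ : ℝ → EuclideanSpace ℝ (Fin 2))
    (v : EuclideanSpace ℝ (Fin 3) → EuclideanSpace ℝ (Fin 3)) (z r θ : ℝ) : ℝ :=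
  inner ℝ (v (Tmap φ z r θ)) (emb23 (deriv φ θ))

/-- `∂_z` for a function of `(z, r̄, θ̄)`. -/
noncomputable def Dz (g : ℝ → ℝ → ℝ → ℝ) (z r θ : ℝ) : ℝ := deriv (fun s => g s r θ) z

/-- `∂_r̄` for a function of `(z, r̄, θ̄)`. -/
noncomputable def Dr (g : ℝ → ℝ → ℝ → ℝ) (z r θ : ℝ) : ℝ := deriv (fun s => g z s θ) r

/-- `∂_θ̄` for a function of `(z, r̄, θ̄)`. -/
noncomputable def Dθ (g : ℝ → ℝ → ℝ → ℝ) (z r θ : ℝ) : ℝ := deriv (fun s => g z r s) θ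

/-- Euclidean curl of a vector field on `ℝ³`. -/
noncomputable def curl3 (w : EuclideanSpace ℝ (Fin 3) → EuclideanSpace ℝ (Fin 3))
    (x : EuclideanSpace ℝ (Fin 3)) : EuclideanSpace ℝ (Fin 3) :=
  !₂[pdE 1 (fun y => w y 2) x - pdE 2 (fun y => w y 1) x,
    pdE 2 (fun y => w y 0) x - pdE 0 (fun y => w y 2) x,
    pdE 0 (fun y => w y 1) x - pdE 1 (fun y => w y 0) x]

/-!
Put `W = ∂_z v`. The third component of `curl curl v` is `∂₁W₁ + ∂₂W₂ − (∂₁² + ∂₂²)v₃`, and on the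
boundary plane the last term vanishes because `v₃` does. What remains is the trace of the
horizontal part of `DW`, which does not depend on the orthonormal basis it is computed in; in the
moving frame `(φ', N)` it reads `∂_r̄ W_r̄ − κ W_r̄ + ∂_θ̄ W_θ̄`, the curvature term coming from the
derivative `φ'' = κ N` of the frame. Since the frame does not depend on `z`, `W_r̄ = ∂_z v_r̄` and
`W_θ̄ = ∂_z v_θ̄`, so differentiating in `θ̄` and commuting partial derivatives gives the formula.
-/

open Filter Function Topology
open scoped ContDiff RealInnerProductSpace

local notation "ℝ²" => EuclideanSpace ℝ (Fin 2)
local notation "ℝ³" => EuclideanSpace ℝ (Fin 3)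

section LineDeriv

variable {𝕜 E F : Type*} [RCLike 𝕜] [NormedAddCommGroup E] [NormedSpace 𝕜 E]
  [NormedAddCommGroup F] [NormedSpace 𝕜 F] {f : E → F} {x : E}

lemma lineDeriv_eventuallyEq_fderiv (hf : ContDiffAt 𝕜 1 f x) (u : E) :
    (fun y => lineDeriv 𝕜 f y u) =ᶠ[𝓝 x] fun y => fderiv 𝕜 f y u :=
  (hf.eventually (by simp)).mono fun _ hy => (hy.differentiableAt one_ne_zero).lineDeriv_eq_fderiv

lemma contDiffAt_lineDeriv {n : ℕ} (hf : ContDiffAt 𝕜 (n + 1) f x) (u : E) :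
    ContDiffAt 𝕜 n (fun y => lineDeriv 𝕜 f y u) x :=
  ((hf.fderiv_right le_rfl).clm_apply contDiffAt_const).congr_of_eventuallyEq
    (lineDeriv_eventuallyEq_fderiv (hf.of_le (by simp)) u)

lemma lineDeriv_lineDeriv_eq_fderiv_fderiv (hf : ContDiffAt 𝕜 2 f x) (u w : E) :
    lineDeriv 𝕜 (fun y => lineDeriv 𝕜 f y w) x u = fderiv 𝕜 (fderiv 𝕜 f) x u w := by
  have hf' : DifferentiableAt 𝕜 (fderiv 𝕜 f) x :=
    (hf.fderiv_right (m := 1) (by norm_num)).differentiableAt one_ne_zero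
  rw [(lineDeriv_eventuallyEq_fderiv (hf.of_le one_le_two) w).lineDeriv_eq,
    (hf'.clm_apply (differentiableAt_const w)).lineDeriv_eq_fderiv,
    fderiv_clm_apply hf' (differentiableAt_const w)]
  simp

lemma lineDeriv_lineDeriv_comm (hf : ContDiffAt 𝕜 2 f x) (u w : E) :
    lineDeriv 𝕜 (fun y => lineDeriv 𝕜 f y w) x u =
      lineDeriv 𝕜 (fun y => lineDeriv 𝕜 f y u) x w := by
  rw [lineDeriv_lineDeriv_eq_fderiv_fderiv hf, lineDeriv_lineDeriv_eq_fderiv_fderiv hf]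
  exact hf.isSymmSndFDerivAt (by simp) u w

lemma lineDeriv_lineDeriv_lineDeriv_reverse (hf : ContDiffAt 𝕜 3 f x) (a b c : E) :
    lineDeriv 𝕜 (fun p => lineDeriv 𝕜 (fun q => lineDeriv 𝕜 f q c) p b) x a =
      lineDeriv 𝕜 (fun p => lineDeriv 𝕜 (fun q => lineDeriv 𝕜 f q a) p b) x c := by
  have hcomm : (fun p => lineDeriv 𝕜 (fun q => lineDeriv 𝕜 f q c) p a) =ᶠ[𝓝 x]
      fun p => lineDeriv 𝕜 (fun q => lineDeriv 𝕜 f q a) p c :=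
    ((hf.of_le (by norm_num)).eventually (by simp)).mono fun _ hp =>
      lineDeriv_lineDeriv_comm hp a c
  rw [lineDeriv_lineDeriv_comm (contDiffAt_lineDeriv (n := 2) (hf.of_le (by norm_num)) c) a b,
    hcomm.lineDeriv_eq,
    lineDeriv_lineDeriv_comm (contDiffAt_lineDeriv (n := 2) (hf.of_le (by norm_num)) a) b c]

end LineDeriv

section CoordinateDerivatives

variable {g : ℝ → ℝ → ℝ → ℝ} {z r θ : ℝ}

lemma uncurry_Dz (g : ℝ → ℝ → ℝ → ℝ) : ↿(Dz g) = fun p => lineDeriv ℝ ↿g p (1, 0, 0) := by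
  funext ⟨z, r, θ⟩
  simpa [HasUncurry.uncurry, lineDeriv, Dz] using
    (deriv_comp_const_add (fun s => g s r θ) z 0).symm

lemma uncurry_Dr (g : ℝ → ℝ → ℝ → ℝ) : ↿(Dr g) = fun p => lineDeriv ℝ ↿g p (0, 1, 0) := by
  funext ⟨z, r, θ⟩
  simpa [HasUncurry.uncurry, lineDeriv, Dr] using
    (deriv_comp_const_add (fun s => g z s θ) r 0).symm

lemma uncurry_Dθ (g : ℝ → ℝ → ℝ → ℝ) : ↿(Dθ g) = fun p => lineDeriv ℝ ↿g p (0, 0, 1) := by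
  funext ⟨z, r, θ⟩
  simpa [HasUncurry.uncurry, lineDeriv, Dθ] using
    (deriv_comp_const_add (fun s => g z r s) θ 0).symm

lemma contDiffAt_Dz {n : ℕ} {p : ℝ × ℝ × ℝ} (hg : ContDiffAt ℝ (n + 1) ↿g p) :
    ContDiffAt ℝ n ↿(Dz g) p :=
  uncurry_Dz g ▸ contDiffAt_lineDeriv hg _

lemma contDiffAt_Dr {n : ℕ} {p : ℝ × ℝ × ℝ} (hg : ContDiffAt ℝ (n + 1) ↿g p) :
    ContDiffAt ℝ n ↿(Dr g) p :=
  uncurry_Dr g ▸ contDiffAt_lineDeriv hg _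

lemma contDiffAt_Dθ {n : ℕ} {p : ℝ × ℝ × ℝ} (hg : ContDiffAt ℝ (n + 1) ↿g p) :
    ContDiffAt ℝ n ↿(Dθ g) p :=
  uncurry_Dθ g ▸ contDiffAt_lineDeriv hg _

lemma hasDerivAt_Dθ (hg : DifferentiableAt ℝ ↿g (z, r, θ)) :
    HasDerivAt (fun s => g z r s) (Dθ g z r θ) θ :=
  (hg.comp (f := fun s => (z, r, s)) θ (by fun_prop)).hasDerivAt

lemma Dz_Dθ_comm (hg : ContDiffAt ℝ 2 ↿g (z, r, θ)) :
    Dz (Dθ g) z r θ = Dθ (Dz g) z r θ := by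
  change ↿(Dz (Dθ g)) (z, r, θ) = ↿(Dθ (Dz g)) (z, r, θ)
  simp only [uncurry_Dz, uncurry_Dθ]
  exact lineDeriv_lineDeriv_comm hg _ _

lemma Dz_Dr_Dθ_reverse (hg : ContDiffAt ℝ 3 ↿g (z, r, θ)) :
    Dz (Dr (Dθ g)) z r θ = Dθ (Dr (Dz g)) z r θ := by
  change ↿(Dz (Dr (Dθ g))) (z, r, θ) = ↿(Dθ (Dr (Dz g))) (z, r, θ)
  simp only [uncurry_Dz, uncurry_Dr, uncurry_Dθ]
  exact lineDeriv_lineDeriv_lineDeriv_reverse hg _ _ _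

lemma Dz_Dθ_Dθ_reverse (hg : ContDiffAt ℝ 3 ↿g (z, r, θ)) :
    Dz (Dθ (Dθ g)) z r θ = Dθ (Dθ (Dz g)) z r θ := by
  change ↿(Dz (Dθ (Dθ g))) (z, r, θ) = ↿(Dθ (Dθ (Dz g))) (z, r, θ)
  simp only [uncurry_Dz, uncurry_Dθ]
  exact lineDeriv_lineDeriv_lineDeriv_reverse hg _ _ _

end CoordinateDerivatives

section NormalCurlCurl

/-- Horizontal divergence `∂₁w₁ + ∂₂w₂` of a vector field on `ℝ³`; applied to `∂_z v` it is the
boundary value of the normal component of `curl curl v`. -/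
noncomputable def horDiv (w : ℝ³ → ℝ³) (x : ℝ³) : ℝ :=
  pdE 0 (fun y => w y 0) x + pdE 1 (fun y => w y 1) x

lemma pdE_apply {w : ℝ³ → ℝ³} {x : ℝ³} (hw : DifferentiableAt ℝ w x) (i j : Fin 3) :
    pdE j (fun y => w y i) x = pdE j w x i := by
  have h := (EuclideanSpace.proj (𝕜 := ℝ) i).hasFDerivAt.comp x hw.hasFDerivAt
  exact congrArg (· (EuclideanSpace.single j 1)) h.fderiv

lemma pdE_sub {F : Type*} [NormedAddCommGroup F] [NormedSpace ℝ F] {f g : ℝ³ → F} {x : ℝ³}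
    (hf : DifferentiableAt ℝ f x) (hg : DifferentiableAt ℝ g x) (j : Fin 3) :
    pdE j (fun y => f y - g y) x = pdE j f x - pdE j g x := by
  simp only [pdE, fderiv_fun_sub hf hg, sub_apply]

lemma contDiff_pdE {F : Type*} [NormedAddCommGroup F] [NormedSpace ℝ F] {f : ℝ³ → F}
    {m n : ℕ∞ω} (hf : ContDiff ℝ n f) (hmn : m + 1 ≤ n) (j : Fin 3) : ContDiff ℝ m (pdE j f) :=
  (hf.fderiv_right hmn).clm_apply contDiff_const

lemma curl3_curl3_apply_two {v : ℝ³ → ℝ³} (hv : ContDiff ℝ 2 v) (x : ℝ³) :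
    curl3 (curl3 v) x 2 = horDiv (pdE 2 v) x -
      (pdE 0 (pdE 0 fun y => v y 2) x + pdE 1 (pdE 1 fun y => v y 2) x) := by
  have hvi (i : Fin 3) : ContDiff ℝ 2 fun y => v y i := (contDiff_piLp 2).1 hv i
  have hd (i j : Fin 3) : DifferentiableAt ℝ (pdE j fun y => v y i) x :=
    (contDiff_pdE (m := 1) (hvi i) (by norm_num) j).differentiable one_ne_zero x
  have hW (i : Fin 3) : (fun y => pdE 2 v y i) = pdE 2 fun y => v y i :=
    funext fun y => (pdE_apply (hv.differentiable two_ne_zero y) i 2).symm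
  have hcurl : curl3 (curl3 v) x 2 =
      pdE 0 (fun y => pdE 2 (fun y => v y 0) y - pdE 0 (fun y => v y 2) y) x -
      pdE 1 (fun y => pdE 1 (fun y => v y 2) y - pdE 2 (fun y => v y 1) y) x := rfl
  rw [hcurl, pdE_sub (hd 0 2) (hd 2 0), pdE_sub (hd 2 1) (hd 1 2), horDiv, hW, hW]
  ring

lemma pdE_eq_zero_of_eq_zero_on_plane {F : Type*} [NormedAddCommGroup F] [NormedSpace ℝ F]
    {g : ℝ³ → F} (hg : ∀ x : ℝ³, x 2 = 0 → g x = 0) {j : Fin 3} (hj : j ≠ 2) :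
    ∀ x : ℝ³, x 2 = 0 → pdE j g x = 0 := by
  intro x hx
  by_cases hd : DifferentiableAt ℝ g x
  · have hline (t : ℝ) : g (x + t • EuclideanSpace.single j 1) = 0 := hg _ (by simp [hx, hj.symm])
    rw [pdE, ← hd.lineDeriv_eq_fderiv]
    simp only [lineDeriv, hline, deriv_const]
  · rw [pdE, fderiv_zero_of_not_differentiableAt hd, zero_apply]

lemma curl3_curl3_apply_two_of_boundary {v : ℝ³ → ℝ³} (hv : ContDiff ℝ 2 v)
    (hbd : ∀ x : ℝ³, x 2 = 0 → v x 2 = 0) {x : ℝ³} (hx : x 2 = 0) :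
    curl3 (curl3 v) x 2 = horDiv (pdE 2 v) x := by
  have h2 {j : Fin 3} (hj : j ≠ 2) : pdE j (pdE j fun y => v y 2) x = 0 :=
    pdE_eq_zero_of_eq_zero_on_plane (pdE_eq_zero_of_eq_zero_on_plane hbd hj) hj x hx
  rw [curl3_curl3_apply_two hv, h2 (by decide), h2 (by decide), add_zero, sub_zero]

end NormalCurlCurl

section Trace

lemma sum_inner_map_eq_of_orthonormalBasis {𝕜 ι κ V : Type*} [RCLike 𝕜] [NormedAddCommGroup V]
    [InnerProductSpace 𝕜 V] [Fintype ι] [Fintype κ] (b : OrthonormalBasis ι 𝕜 V)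
    (c : OrthonormalBasis κ 𝕜 V) (A : V →ₗ[𝕜] V) :
    ∑ i, inner 𝕜 (b i) (A (b i)) = ∑ j, inner 𝕜 (c j) (A (c j)) := by
  rw [← A.trace_eq_sum_inner b, ← A.trace_eq_sum_inner c]

/-- `emb23` as a continuous linear map, so that its derivative and its adjoint are available. -/
noncomputable def emb23L : ℝ² →L[ℝ] ℝ³ :=
  LinearMap.toContinuousLinearMap
    { toFun := emb23
      map_add' := fun x y => by ext i; fin_cases i <;> simp [emb23]
      map_smul' := fun a x => by ext i; fin_cases i <;> simp [emb23] }

lemma horDiv_eq_of_orthonormal {w : ℝ³ → ℝ³} {x : ℝ³} (hw : DifferentiableAt ℝ w x) {e : Fin 2 → ℝ²}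
    (he : Orthonormal ℝ e) :
    horDiv w x = ∑ i, ⟪fderiv ℝ w x (emb23 (e i)), emb23 (e i)⟫ := by
  let A : ℝ² →L[ℝ] ℝ² := emb23L.adjoint ∘L fderiv ℝ w x ∘L emb23L
  let b : OrthonormalBasis (Fin 2) ℝ ℝ² := OrthonormalBasis.mk he
    (he.linearIndependent.span_eq_top_of_card_eq_finrank (by simp)).ge
  have hA (u : ℝ²) : ⟪u, A u⟫ = ⟪fderiv ℝ w x (emb23 u), emb23 u⟫ := by
    rw [real_inner_comm]
    exact emb23L.adjoint_inner_left u _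
  have hstd (i : Fin 2) : emb23 (EuclideanSpace.single i 1) =
      EuclideanSpace.single i.castSucc 1 := by
    ext k; fin_cases i <;> fin_cases k <;> simp [emb23]
  calc horDiv w x
      = ∑ i : Fin 2, ⟪EuclideanSpace.basisFun (Fin 2) ℝ i,
          A (EuclideanSpace.basisFun (Fin 2) ℝ i)⟫ := by
        simp only [horDiv, pdE_apply hw]
        simp [hA, hstd, pdE, EuclideanSpace.inner_single_right]
    _ = ∑ i, ⟪b i, A (b i)⟫ := sum_inner_map_eq_of_orthonormalBasis _ b A.toLinearMap
    _ = ∑ i, ⟪fderiv ℝ w x (emb23 (e i)), emb23 (e i)⟫ := by simp [b, hA]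

end Trace

section Curve

variable {φ : ℝ → ℝ²} {θ : ℝ}

lemma contDiffAt_deriv {F : Type*} [NormedAddCommGroup F] [NormedSpace ℝ F] {f : ℝ → F} {x : ℝ}
    {m n : ℕ∞ω} (hf : ContDiffAt ℝ n f x) (hmn : m + 1 ≤ n) : ContDiffAt ℝ m (deriv f) x :=
  (hf.fderiv_right hmn).clm_apply contDiffAt_const

lemma contDiffAt_curveKappa {n : ℕ∞ω} (hφ : ContDiffAt ℝ (n + 1 + 1) φ θ)
    (hcurv : deriv (deriv φ) θ ≠ 0) : ContDiffAt ℝ n (curveKappa φ) θ :=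
  (contDiffAt_deriv (contDiffAt_deriv hφ le_rfl) le_rfl).norm ℝ hcurv

lemma contDiffAt_curveN {n : ℕ∞ω} (hφ : ContDiffAt ℝ (n + 1 + 1) φ θ)
    (hcurv : deriv (deriv φ) θ ≠ 0) : ContDiffAt ℝ n (curveN φ) θ :=
  ((contDiffAt_curveKappa hφ hcurv).inv (norm_ne_zero_iff.2 hcurv)).smul
    (contDiffAt_deriv (contDiffAt_deriv hφ le_rfl) le_rfl)

lemma curveKappa_smul_curveN (φ : ℝ → ℝ²) (θ : ℝ) :
    curveKappa φ θ • curveN φ θ = deriv (deriv φ) θ := by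
  rcases eq_or_ne (deriv (deriv φ) θ) 0 with h | h
  · simp [curveN, h]
  · rw [curveN, curveKappa, smul_inv_smul₀ (norm_ne_zero_iff.2 h)]

lemma inner_deriv_eq_zero_of_norm_eventually_const {V : Type*} [NormedAddCommGroup V]
    [InnerProductSpace ℝ V] {f : ℝ → V} {x c : ℝ} (hf : DifferentiableAt ℝ f x)
    (hc : ∀ᶠ y in 𝓝 x, ‖f y‖ = c) : ⟪f x, deriv f x⟫ = 0 := by
  have hconst : (‖f ·‖ ^ 2) =ᶠ[𝓝 x] fun _ => c ^ 2 := hc.mono fun y hy => by simp only [hy]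
  have h := hf.hasDerivAt.norm_sq.deriv
  rw [hconst.deriv_eq, deriv_const] at h
  linarith

lemma orthonormal_curve_frame (hφ : ContDiffAt ℝ 2 φ θ) (hunit : ∀ᶠ s in 𝓝 θ, ‖deriv φ s‖ = 1)
    (hcurv : deriv (deriv φ) θ ≠ 0) : Orthonormal ℝ ![curveN φ θ, deriv φ θ] := by
  have hφ' : DifferentiableAt ℝ (deriv φ) θ :=
    (contDiffAt_deriv (m := 1) hφ (by norm_num)).differentiableAt one_ne_zero
  have hN : ‖curveN φ θ‖ = 1 := norm_smul_inv_norm hcurv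
  have horth : ⟪curveN φ θ, deriv φ θ⟫ = 0 := by
    rw [curveN, real_inner_smul_left, real_inner_comm,
      inner_deriv_eq_zero_of_norm_eventually_const hφ' hunit, mul_zero]
  simp [orthonormal_vecCons_iff, hN, horth, hunit.self_of_nhds]

end Curve

section FrameComponents

/-- Component of `v`, in the coordinates `T`, along a horizontal vector `M(θ̄)` that moves with the
curve: `M = N` gives `v_r̄` and `M = φ'` gives `v_θ̄`. -/
noncomputable def frameComp (φ M : ℝ → ℝ²) (v : ℝ³ → ℝ³) (z r θ : ℝ) : ℝ :=
  ⟪v (Tmap φ z r θ), emb23 (M θ)⟫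

variable {φ M : ℝ → ℝ²} {v : ℝ³ → ℝ³} {z r θ : ℝ}

lemma Tmap_eq (φ : ℝ → ℝ²) (z r θ : ℝ) :
    Tmap φ z r θ = emb23L (φ θ + r • curveN φ θ) + z • EuclideanSpace.single 2 1 := by
  ext i
  fin_cases i <;> simp [Tmap, emb23L, emb23]

lemma hasDerivAt_Tmap_z (φ : ℝ → ℝ²) (z r θ : ℝ) :
    HasDerivAt (fun s => Tmap φ s r θ) (EuclideanSpace.single 2 1) z := by
  simp only [Tmap_eq]
  have h := (hasDerivAt_id z).smul_const (EuclideanSpace.single 2 1 : ℝ³)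
  rw [one_smul] at h
  exact h.const_add _

lemma hasDerivAt_Tmap_r (φ : ℝ → ℝ²) (z r θ : ℝ) :
    HasDerivAt (fun s => Tmap φ z s θ) (emb23 (curveN φ θ)) r := by
  simp only [Tmap_eq]
  have h := ((hasDerivAt_id r).smul_const (curveN φ θ)).const_add (φ θ)
  rw [one_smul] at h
  exact (emb23L.hasFDerivAt.comp_hasDerivAt r h).add_const _

lemma hasDerivAt_emb23_comp {M' : ℝ²} (hM : HasDerivAt M M' θ) :
    HasDerivAt (fun s => emb23 (M s)) (emb23 M') θ :=
  emb23L.hasFDerivAt.comp_hasDerivAt θ hM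

lemma hasDerivAt_Tmap_θ {φ' : ℝ²} (hφ : HasDerivAt φ φ' θ) (z : ℝ) :
    HasDerivAt (fun s => Tmap φ z 0 s) (emb23 φ') θ := by
  simp only [Tmap_eq, zero_smul, add_zero]
  exact (hasDerivAt_emb23_comp hφ).add_const _

lemma contDiffAt_comp_snd_snd {F : Type*} [NormedAddCommGroup F] [NormedSpace ℝ F] {f : ℝ → F}
    {n : ℕ∞ω} (hf : ContDiffAt ℝ n f θ) :
    ContDiffAt ℝ n (fun p : ℝ × ℝ × ℝ => f p.2.2) (z, r, θ) :=
  hf.comp (z, r, θ) (contDiffAt_snd.comp (z, r, θ) contDiffAt_snd)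

lemma contDiffAt_Tmap {n : ℕ∞ω} (hφ : ContDiffAt ℝ n φ θ) (hN : ContDiffAt ℝ n (curveN φ) θ) :
    ContDiffAt ℝ n ↿(Tmap φ) (z, r, θ) := by
  have hr : ContDiffAt ℝ n (fun p : ℝ × ℝ × ℝ => p.2.1) (z, r, θ) := by fun_prop
  have hz : ContDiffAt ℝ n
      (fun p : ℝ × ℝ × ℝ => p.1 • (EuclideanSpace.single 2 1 : ℝ³)) (z, r, θ) := by fun_prop
  have hplane : ContDiffAt ℝ n
      (fun p : ℝ × ℝ × ℝ => φ p.2.2 + p.2.1 • curveN φ p.2.2) (z, r, θ) :=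
    (contDiffAt_comp_snd_snd hφ).add (hr.smul (contDiffAt_comp_snd_snd hN))
  have hT : ↿(Tmap φ) = fun p : ℝ × ℝ × ℝ =>
      emb23L (φ p.2.2 + p.2.1 • curveN φ p.2.2) + p.1 • EuclideanSpace.single 2 1 :=
    funext fun p => Tmap_eq φ p.1 p.2.1 p.2.2
  rw [hT]
  exact (emb23L.contDiff.contDiffAt.comp (z, r, θ) hplane).add hz

lemma contDiffAt_frameComp {n : ℕ∞ω} (hφ : ContDiffAt ℝ n φ θ) (hN : ContDiffAt ℝ n (curveN φ) θ)
    (hM : ContDiffAt ℝ n M θ) (hv : ContDiffAt ℝ n v (Tmap φ z r θ)) :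
    ContDiffAt ℝ n ↿(frameComp φ M v) (z, r, θ) := by
  have hM' : ContDiffAt ℝ n (fun p : ℝ × ℝ × ℝ => emb23L (M p.2.2)) (z, r, θ) :=
    emb23L.contDiff.contDiffAt.comp (z, r, θ) (contDiffAt_comp_snd_snd hM)
  have hv' : ContDiffAt ℝ n (v ∘ ↿(Tmap φ)) (z, r, θ) := hv.comp (z, r, θ) (contDiffAt_Tmap hφ hN)
  exact hv'.inner ℝ hM'

lemma contDiffAt_vrComp {n : ℕ∞ω} (hφ : ContDiffAt ℝ (n + 1 + 1) φ θ)
    (hcurv : deriv (deriv φ) θ ≠ 0) (hv : ContDiffAt ℝ n v (Tmap φ z r θ)) :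
    ContDiffAt ℝ n ↿(vrComp φ v) (z, r, θ) :=
  have hN := contDiffAt_curveN hφ hcurv
  contDiffAt_frameComp (hφ.of_le (le_self_add.trans le_self_add)) hN hN hv

lemma contDiffAt_vθComp {n : ℕ∞ω} (hφ : ContDiffAt ℝ (n + 1 + 1) φ θ)
    (hcurv : deriv (deriv φ) θ ≠ 0) (hv : ContDiffAt ℝ n v (Tmap φ z r θ)) :
    ContDiffAt ℝ n ↿(vθComp φ v) (z, r, θ) :=
  contDiffAt_frameComp (hφ.of_le (le_self_add.trans le_self_add)) (contDiffAt_curveN hφ hcurv)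
    (contDiffAt_deriv (hφ.of_le le_self_add) le_rfl) hv

lemma Dz_frameComp (hv : Differentiable ℝ v) (φ M : ℝ → ℝ²) :
    Dz (frameComp φ M v) = frameComp φ M (pdE 2 v) := by
  funext z r θ
  have h := ((hv _).hasFDerivAt.comp_hasDerivAt z (hasDerivAt_Tmap_z φ z r θ)).inner ℝ
    (hasDerivAt_const z (emb23 (M θ)))
  simpa [Dz, frameComp, pdE] using h.deriv

lemma Dr_frameComp (hv : DifferentiableAt ℝ v (Tmap φ z r θ)) :
    Dr (frameComp φ M v) z r θ =
      ⟪fderiv ℝ v (Tmap φ z r θ) (emb23 (curveN φ θ)), emb23 (M θ)⟫ := by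
  have h := (hv.hasFDerivAt.comp_hasDerivAt r (hasDerivAt_Tmap_r φ z r θ)).inner ℝ
    (hasDerivAt_const r (emb23 (M θ)))
  simpa [Dr, frameComp] using h.deriv

lemma Dθ_frameComp_zero (hφ : DifferentiableAt ℝ φ θ) (hM : DifferentiableAt ℝ M θ)
    (hv : DifferentiableAt ℝ v (Tmap φ z 0 θ)) :
    Dθ (frameComp φ M v) z 0 θ = ⟪v (Tmap φ z 0 θ), emb23 (deriv M θ)⟫ +
      ⟪fderiv ℝ v (Tmap φ z 0 θ) (emb23 (deriv φ θ)), emb23 (M θ)⟫ :=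
  ((hv.hasFDerivAt.comp_hasDerivAt θ (hasDerivAt_Tmap_θ hφ.hasDerivAt z)).inner ℝ
    (hasDerivAt_emb23_comp hM.hasDerivAt)).deriv

lemma horDiv_Tmap_zero (hφ : ContDiffAt ℝ 2 φ θ) (hunit : ∀ᶠ s in 𝓝 θ, ‖deriv φ s‖ = 1)
    (hcurv : deriv (deriv φ) θ ≠ 0) (hv : DifferentiableAt ℝ v (Tmap φ z 0 θ)) :
    horDiv v (Tmap φ z 0 θ) = Dr (vrComp φ v) z 0 θ - curveKappa φ θ * vrComp φ v z 0 θ +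
      Dθ (vθComp φ v) z 0 θ := by
  have hφ' : DifferentiableAt ℝ (deriv φ) θ :=
    (contDiffAt_deriv (m := 1) hφ (by norm_num)).differentiableAt one_ne_zero
  have hr := Dr_frameComp (M := curveN φ) hv
  have hθ := Dθ_frameComp_zero (hφ.differentiableAt two_ne_zero) hφ' hv
  have hturn : ⟪v (Tmap φ z 0 θ), emb23 (deriv (deriv φ) θ)⟫ =
      curveKappa φ θ * vrComp φ v z 0 θ := by
    rw [← curveKappa_smul_curveN]
    exact (congrArg _ (emb23L.map_smul _ _)).trans (real_inner_smul_right _ _ _)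
  calc horDiv v (Tmap φ z 0 θ)
      = ⟪fderiv ℝ v (Tmap φ z 0 θ) (emb23 (curveN φ θ)), emb23 (curveN φ θ)⟫ +
          ⟪fderiv ℝ v (Tmap φ z 0 θ) (emb23 (deriv φ θ)), emb23 (deriv φ θ)⟫ := by
        simpa using horDiv_eq_of_orthonormal hv (orthonormal_curve_frame hφ hunit hcurv)
    _ = Dr (frameComp φ (curveN φ) v) z 0 θ - curveKappa φ θ * vrComp φ v z 0 θ +
          Dθ (frameComp φ (deriv φ) v) z 0 θ := by
        rw [hr, hθ, hturn]
        ring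

lemma inner_curl3_curl3_Tmap_zero (hφ : ContDiffAt ℝ 2 φ θ)
    (hunit : ∀ᶠ s in 𝓝 θ, ‖deriv φ s‖ = 1) (hcurv : deriv (deriv φ) θ ≠ 0)
    (hv : ContDiff ℝ 2 v) (hbd : ∀ x : ℝ³, x 2 = 0 → v x 2 = 0) :
    ⟪curl3 (curl3 v) (Tmap φ 0 0 θ), EuclideanSpace.single 2 (1 : ℝ)⟫ =
      Dr (Dz (vrComp φ v)) 0 0 θ - curveKappa φ θ * Dz (vrComp φ v) 0 0 θ +
        Dθ (Dz (vθComp φ v)) 0 0 θ := by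
  have hv' : Differentiable ℝ v := hv.differentiable two_ne_zero
  have hW : Differentiable ℝ (pdE 2 v) :=
    (contDiff_pdE (m := 1) hv (by norm_num) 2).differentiable one_ne_zero
  have hr : Dz (vrComp φ v) = vrComp φ (pdE 2 v) := Dz_frameComp hv' φ (curveN φ)
  have hθ : Dz (vθComp φ v) = vθComp φ (pdE 2 v) := Dz_frameComp hv' φ (deriv φ)
  rw [hr, hθ, ← horDiv_Tmap_zero hφ hunit hcurv (hW _),
    ← curl3_curl3_apply_two_of_boundary hv hbd (by simp [Tmap]),
    EuclideanSpace.inner_single_right]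
  simp

end FrameComponents

theorem stmt11_general {φ : ℝ → ℝ²} {θ : ℝ} (hφ : ContDiffAt ℝ 5 φ θ)
    (hunit : ∀ᶠ s in 𝓝 θ, ‖deriv φ s‖ = 1) (hcurv : deriv (deriv φ) θ ≠ 0)
    {v : ℝ³ → ℝ³} (hv : ContDiff ℝ 3 v) (hbd : ∀ x : ℝ³, x 2 = 0 → v x 2 = 0) :
    Dθ (fun z' r' θ' =>
        ⟪curl3 (curl3 v) (Tmap φ z' r' θ'), EuclideanSpace.single 2 (1 : ℝ)⟫) 0 0 θ
      = -(deriv (curveKappa φ) θ * Dz (vrComp φ v) 0 0 θ)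
        - curveKappa φ θ * Dz (Dθ (vrComp φ v)) 0 0 θ
        + Dz (Dr (Dθ (vrComp φ v))) 0 0 θ
        + Dz (Dθ (Dθ (vθComp φ v))) 0 0 θ := by
  have hφ5 : ContDiffAt ℝ (3 + 1 + 1) φ θ := hφ.of_le (by norm_num)
  have hκ : DifferentiableAt ℝ (curveKappa φ) θ :=
    (contDiffAt_curveKappa hφ5 hcurv).differentiableAt three_ne_zero
  have hvr : ContDiffAt ℝ 3 ↿(vrComp φ v) (0, 0, θ) := contDiffAt_vrComp hφ5 hcurv hv.contDiffAt
  have hvθ : ContDiffAt ℝ 3 ↿(vθComp φ v) (0, 0, θ) := contDiffAt_vθComp hφ5 hcurv hv.contDiffAt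
  have hDzr : ContDiffAt ℝ 2 ↿(Dz (vrComp φ v)) (0, 0, θ) := contDiffAt_Dz hvr
  have hDzθ : ContDiffAt ℝ 2 ↿(Dz (vθComp φ v)) (0, 0, θ) := contDiffAt_Dz hvθ
  have hnormal : (fun s => ⟪curl3 (curl3 v) (Tmap φ 0 0 s), EuclideanSpace.single 2 (1 : ℝ)⟫)
      =ᶠ[𝓝 θ] fun s => Dr (Dz (vrComp φ v)) 0 0 s - curveKappa φ s * Dz (vrComp φ v) 0 0 s +
        Dθ (Dz (vθComp φ v)) 0 0 s := by
    have hφ'' : ContinuousAt (deriv (deriv φ)) θ :=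
      (contDiffAt_deriv (contDiffAt_deriv hφ5 le_rfl) le_rfl).continuousAt
    filter_upwards [hφ.eventually (by simp), hunit.eventually_nhds, hφ''.eventually_ne hcurv]
      with s hφs hunits hcurvs
    exact inner_curl3_curl3_Tmap_zero (hφs.of_le (by norm_num)) hunits hcurvs
      (hv.of_le (by norm_num)) hbd
  have hderiv := ((hasDerivAt_Dθ ((contDiffAt_Dr (n := 1) hDzr).differentiableAt one_ne_zero)).sub
    (hκ.hasDerivAt.mul (hasDerivAt_Dθ (hDzr.differentiableAt two_ne_zero)))).add
    (hasDerivAt_Dθ ((contDiffAt_Dθ (n := 1) hDzθ).differentiableAt one_ne_zero))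
  rw [Dθ, (hderiv.congr_of_eventuallyEq hnormal).deriv, Dz_Dθ_comm (hvr.of_le (by norm_num)),
    Dz_Dr_Dθ_reverse hvr, Dz_Dθ_Dθ_reverse hvθ]
  ring

/-- For a smooth divergence-free vector field `v` vanishing on the
boundary plane `{x₃ = 0}`, at every point `(0,0,θ̄)` the tangential derivative of the
normal component of `curl curl v` (`= −Δv`) satisfies
`∂_θ̄[(curl curl v)(T)·(0,0,1)] = −κ'·∂_z v_r̄ − κ·∂_z∂_θ̄ v_r̄ + ∂_z∂_r̄∂_θ̄ v_r̄
  + ∂_z∂_θ̄² v_θ̄`. -/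
theorem stmt11 (δ : ℝ) (hδ : 0 < δ) (φ : ℝ → EuclideanSpace ℝ (Fin 2))
    (hφ : ContDiffOn ℝ (⊤ : ℕ∞) φ (Set.Ioo (-δ) δ))
    (hunit : ∀ θ ∈ Set.Ioo (-δ) δ, ‖deriv φ θ‖ = 1)
    (hcurv : ∀ θ ∈ Set.Ioo (-δ) δ, deriv (deriv φ) θ ≠ 0)
    (v : EuclideanSpace ℝ (Fin 3) → EuclideanSpace ℝ (Fin 3))
    (hv : ContDiff ℝ (⊤ : ℕ∞) v)
    (hdiv : ∀ x : EuclideanSpace ℝ (Fin 3), div3 v x = 0)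
    (hbd : ∀ x : EuclideanSpace ℝ (Fin 3), x 2 = 0 → v x = 0) :
    ∀ θ ∈ Set.Ioo (-δ) δ,
      Dθ (fun z' r' θ' =>
          (inner ℝ (curl3 (curl3 v) (Tmap φ z' r' θ'))
            (EuclideanSpace.single 2 (1:ℝ)) : ℝ)) 0 0 θ
        = -(deriv (curveKappa φ) θ * Dz (vrComp φ v) 0 0 θ)
          - curveKappa φ θ * Dz (Dθ (vrComp φ v)) 0 0 θ
          + Dz (Dr (Dθ (vrComp φ v))) 0 0 θ
          + Dz (Dθ (Dθ (vθComp φ v))) 0 0 θ := by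
  intro θ hθ
  have hs : Set.Ioo (-δ) δ ∈ 𝓝 θ := isOpen_Ioo.mem_nhds hθ
  exact stmt11_general ((hφ.contDiffAt hs).of_le (by norm_cast)) (eventually_of_mem hs hunit)
    (hcurv θ hθ) (hv.of_le (by norm_cast)) fun x hx => by simp [hbd x hx]
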